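/- Let n ≥ 1 and let μ = (μ_1,…,μ_m) and μ̃ = (μ̃_1,…,μ̃_ℓ) be partitions of n. For a finite field F with q elements, let S(F) denote the number of tuples (f_1,…,f_m, g_1,…,g_ℓ) of monic polynomials in F[T] with deg f_i = μ_i, deg g_j = μ̃_j, and f_1·…·f_m = g_1·…·g_ℓ. Then S(F)/q^n → N_{μ,μ̃} as q → ∞; that is, for every ε > 0 there exists C such that for every finite field F of cardinality q ≥ C, |S(F)/q^n − N_{μ,μ̃}| < ε. -/

import Mathlib

/-- `Nmat μ ν` is the number of `m × l` matrices of non-negative integers whose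
`i`-th row sums to `μ i` and whose `j`-th column sums to `ν j`. -/
noncomputable def Nmat {m l : ℕ} (μ : Fin m → ℕ) (ν : Fin l → ℕ) : ℕ :=
  Nat.card {M : Fin m → Fin l → ℕ //
    (∀ i, ∑ j, M i j = μ i) ∧ (∀ j, ∑ i, M i j = ν j)}

/-!
A matrix of monic polynomials with prescribed row and column degree sums has row products `f` and
column products `g` with `∏ f = ∏ g`, and unique factorization shows that every solution arises in
this way. There are `N q ^ n` such matrices: `q ^ n` for each matrix of degrees. If the entries are
pairwise coprime, then the matrix is determined by its row and column products, the `(i, j)` entry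
being the common part of `f i` and `g j`. Two given entries share a monic factor of degree `k ≥ 1`
for at most `q ^ (n - k)` of the `q ^ n` matrices with given degrees, so all but `O(q ^ (n - 1))`
matrices have pairwise coprime entries.
-/

open Polynomial Finset Function

universe u

section Refinement

variable {α ι κ : Type*}

theorem exists_associated_prod_of_dvd_prod [CommMonoid α] [DecompositionMonoid α] {t : Finset κ}
    {g : κ → α} {a : α} (ha : a ∣ ∏ j ∈ t, g j) :
    ∃ d : κ → α, (∀ j ∈ t, d j ∣ g j) ∧ Associated a (∏ j ∈ t, d j) := by
  classical
  induction t using Finset.induction_on generalizing a with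
  | empty => exact ⟨1, by simp, by simpa [isUnit_iff_dvd_one] using ha⟩
  | insert j₀ t hj₀ ih =>
    rw [prod_insert hj₀] at ha
    obtain ⟨b, c, hb, hc, rfl⟩ := exists_dvd_and_dvd_of_dvd_mul ha
    obtain ⟨d, hd, hcd⟩ := ih hc
    have hne : ∀ j ∈ t, j ≠ j₀ := fun j hj => ne_of_mem_of_not_mem hj hj₀
    refine ⟨update d j₀ b, forall_mem_insert _ _ _ |>.2 ⟨by simpa using hb, fun j hj => ?_⟩, ?_⟩
    · simpa [hne j hj] using hd j hj
    · rw [prod_insert hj₀, update_self, prod_update_of_notMem hj₀]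
      exact hcd.mul_left b

theorem exists_matrix_associated_prod [CommMonoidWithZero α] [IsCancelMulZero α]
    [DecompositionMonoid α] {s : Finset ι} {t : Finset κ} {f : ι → α} {g : κ → α}
    (hf : ∀ i ∈ s, f i ≠ 0) (hfg : Associated (∏ i ∈ s, f i) (∏ j ∈ t, g j)) :
    ∃ h : ι → κ → α, (∀ i ∈ s, Associated (∏ j ∈ t, h i j) (f i)) ∧
      ∀ j ∈ t, Associated (∏ i ∈ s, h i j) (g j) := by
  classical
  induction s using Finset.induction_on generalizing g with
  | empty =>
    have hunit : IsUnit (∏ j ∈ t, g j) := by simpa using hfg.symm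
    refine ⟨1, by simp, fun j hj => ?_⟩
    simpa using (associated_one_iff_isUnit.2 (isUnit_of_dvd_unit (dvd_prod_of_mem g hj) hunit)).symm
  | insert i₀ s hi₀ ih =>
    obtain ⟨hfi₀, hfs⟩ := forall_mem_insert _ _ _ |>.1 hf
    rw [prod_insert hi₀] at hfg
    obtain ⟨d, hdg, hfd⟩ :=
      exists_associated_prod_of_dvd_prod ((dvd_mul_right (f i₀) _).trans hfg.dvd)
    choose! e hde using hdg
    have hfe : Associated (∏ i ∈ s, f i) (∏ j ∈ t, e j) := by
      refine Associated.of_mul_left ?_ hfd hfi₀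
      rwa [← prod_mul_distrib, ← prod_congr rfl hde]
    obtain ⟨h, hrow, hcol⟩ := ih hfs hfe
    have hne : ∀ i ∈ s, i ≠ i₀ := fun i hi => ne_of_mem_of_not_mem hi hi₀
    refine ⟨update h i₀ d, forall_mem_insert _ _ _ |>.2 ⟨?_, fun i hi => ?_⟩, fun j hj => ?_⟩
    · simpa using hfd.symm
    · simpa [hne i hi] using hrow i hi
    · have hrest : ∏ i ∈ s, update h i₀ d i j = ∏ i ∈ s, h i j :=
        prod_congr rfl fun i hi => by rw [update_of_ne (hne i hi)]
      rw [prod_insert hi₀, update_self, hrest, hde j hj]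
      exact (hcol j hj).mul_left (d j)

variable [Fintype ι] [Fintype κ]

theorem exists_monic_matrix_prod_eq {F : Type*} [Field F] {f : ι → F[X]} {g : κ → F[X]}
    (hf : ∀ i, (f i).Monic) (hg : ∀ j, (g j).Monic) (hfg : ∏ i, f i = ∏ j, g j) :
    ∃ h : ι × κ → F[X], (∀ x, (h x).Monic) ∧
      (∀ i, ∏ j, h (i, j) = f i) ∧ ∀ j, ∏ i, h (i, j) = g j := by
  classical
  obtain ⟨h, hrow, hcol⟩ := exists_matrix_associated_prod (s := univ) (t := univ)
    (fun i _ => (hf i).ne_zero) (.of_eq hfg)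
  have hne (i : ι) (j : κ) : h i j ≠ 0 :=
    prod_ne_zero_iff.1 ((hrow i (mem_univ i)).ne_zero_iff.2 (hf i).ne_zero) j (mem_univ j)
  have hmonic (i : ι) (j : κ) : (normalize (h i j)).Monic := monic_normalize (hne i j)
  refine ⟨fun x => normalize (h x.1 x.2), fun x => hmonic x.1 x.2, fun i => ?_, fun j => ?_⟩
  · refine eq_of_monic_of_associated (monic_prod_of_monic _ _ fun j _ => hmonic i j) (hf i) ?_
    exact (Associated.prod _ _ _ fun j _ => normalize_associated _).trans (hrow i (mem_univ i))
  · refine eq_of_monic_of_associated (monic_prod_of_monic _ _ fun i _ => hmonic i j) (hg j) ?_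
    exact (Associated.prod _ _ _ fun i _ => normalize_associated _).trans (hcol j (mem_univ j))

theorem dvd_of_row_prod_eq_of_col_prod_eq {R : Type*} [CommSemiring R] {h h' : ι × κ → R}
    (hrow : ∀ i, ∏ j, h (i, j) = ∏ j, h' (i, j)) (hcol : ∀ j, ∏ i, h (i, j) = ∏ i, h' (i, j))
    (hcop : Pairwise (IsCoprime on fun j => ∏ i, h (i, j))) (x : ι × κ) : h x ∣ h' x := by
  classical
  obtain ⟨i, j⟩ := x
  have hdvd : h (i, j) ∣ h' (i, j) * ∏ k ∈ univ.erase j, h' (i, k) := by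
    rw [mul_prod_erase _ (fun k => h' (i, k)) (mem_univ j), ← hrow]
    exact dvd_prod_of_mem (fun k => h (i, k)) (mem_univ j)
  refine IsCoprime.dvd_of_dvd_mul_right (IsCoprime.prod_right fun k hk => ?_) hdvd
  refine (hcop (ne_of_mem_erase hk).symm).mono ?_ ?_
  · exact dvd_prod_of_mem (fun i => h (i, j)) (mem_univ i)
  · exact (dvd_prod_of_mem (fun i => h' (i, k)) (mem_univ i)).trans (hcol k).symm.dvd

theorem eq_of_row_prod_eq_of_col_prod_eq {F : Type*} [Field F] {h h' : ι × κ → F[X]}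
    (hm : ∀ x, (h x).Monic) (hm' : ∀ x, (h' x).Monic)
    (hrow : ∀ i, ∏ j, h (i, j) = ∏ j, h' (i, j)) (hcol : ∀ j, ∏ i, h (i, j) = ∏ i, h' (i, j))
    (hcop : Pairwise (IsCoprime on h)) : h = h' := by
  have hcop_col : Pairwise (IsCoprime on fun j => ∏ i, h (i, j)) := fun j k hjk =>
    IsCoprime.prod_left fun i _ => IsCoprime.prod_right fun i' _ => hcop (by simp [hjk])
  funext x
  refine eq_of_monic_of_associated (hm x) (hm' x) (associated_of_dvd_dvd ?_ ?_)
  · exact dvd_of_row_prod_eq_of_col_prod_eq hrow hcol hcop_col x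
  · exact dvd_of_row_prod_eq_of_col_prod_eq (fun i => (hrow i).symm) (fun j => (hcol j).symm)
      (by simpa only [hcol] using hcop_col) x

end Refinement

theorem exists_monic_dvd_dvd_of_not_isCoprime {F : Type*} [Field F] {a b : F[X]} (ha : a ≠ 0)
    (hab : ¬ IsCoprime a b) : ∃ c : F[X], c.Monic ∧ 0 < c.natDegree ∧ c ∣ a ∧ c ∣ b := by
  classical
  contrapose! hab
  refine isCoprime_of_irreducible_dvd (fun h => ha h.1) fun p hp hpa hpb => ?_
  refine hab (normalize p) (monic_normalize hp.ne_zero) ?_ ?_ ?_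
  · exact ((associated_normalize p).irreducible hp).natDegree_pos
  · exact normalize_dvd_iff.2 hpa
  · exact normalize_dvd_iff.2 hpb

section MonicTuples

variable (F : Type*) [Field F] [Fintype F]

/-- The finite set of monic polynomials of degree `d` over a finite field, enumerated by their
`d` lower coefficients. -/
noncomputable def monicsOfDegree (d : ℕ) : Finset F[X] :=
  univ.map (((monicEquivDegreeLT d).trans (degreeLTEquiv F d).toEquiv).symm.toEmbedding.trans
    (.subtype _))

variable {F}

theorem mem_monicsOfDegree {d : ℕ} {p : F[X]} :
    p ∈ monicsOfDegree F d ↔ p.Monic ∧ p.natDegree = d := by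
  let e := (monicEquivDegreeLT d).trans (degreeLTEquiv F d).toEquiv
  simp only [monicsOfDegree, mem_map, mem_univ, true_and]
  constructor
  · rintro ⟨a, rfl⟩
    exact (e.symm a).2
  · exact fun hp => ⟨e ⟨p, hp⟩, congrArg Subtype.val (e.symm_apply_apply ⟨p, hp⟩)⟩

theorem card_monicsOfDegree (d : ℕ) : #(monicsOfDegree F d) = Fintype.card F ^ d := by
  simp [monicsOfDegree]

open Classical in
theorem card_filter_dvd_monicsOfDegree_mul_le {c : F[X]} (hc : c.Monic) (d : ℕ) :
    #{p ∈ monicsOfDegree F d | c ∣ p} * Fintype.card F ^ c.natDegree ≤ Fintype.card F ^ d := by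
  by_cases hcd : c.natDegree ≤ d
  · have hsub : {p ∈ monicsOfDegree F d | c ∣ p} ⊆
        (monicsOfDegree F (d - c.natDegree)).image (c * ·) := by
      intro p hp
      obtain ⟨hpd, b, rfl⟩ := mem_filter.1 hp
      obtain ⟨hmonic, hdeg⟩ := mem_monicsOfDegree.1 hpd
      have hb : b.Monic := hc.of_mul_monic_left hmonic
      rw [hc.natDegree_mul hb] at hdeg
      exact mem_image_of_mem _ (mem_monicsOfDegree.2 ⟨hb, by omega⟩)
    calc #{p ∈ monicsOfDegree F d | c ∣ p} * Fintype.card F ^ c.natDegree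
        ≤ Fintype.card F ^ (d - c.natDegree) * Fintype.card F ^ c.natDegree := by
          gcongr
          exact (card_le_card hsub).trans (card_image_le.trans (card_monicsOfDegree _).le)
      _ = Fintype.card F ^ d := by rw [← pow_add, Nat.sub_add_cancel hcd]
  · have hempty : {p ∈ monicsOfDegree F d | c ∣ p} = ∅ := by
      refine filter_eq_empty_iff.2 fun p hp hdvd => hcd ?_
      obtain ⟨hmonic, rfl⟩ := mem_monicsOfDegree.1 hp
      exact natDegree_le_of_dvd hdvd hmonic.ne_zero
    simp [hempty]

variable {ι : Type*} [Fintype ι]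

variable (F) in
open Classical in
/-- The finite set of tuples of monic polynomials of degrees `d i`. -/
noncomputable def monicTuples (d : ι → ℕ) : Finset (ι → F[X]) :=
  Fintype.piFinset fun i => monicsOfDegree F (d i)

theorem mem_monicTuples {d : ι → ℕ} {h : ι → F[X]} :
    h ∈ monicTuples F d ↔ ∀ i, (h i).Monic ∧ (h i).natDegree = d i := by
  simp only [monicTuples, Fintype.mem_piFinset, mem_monicsOfDegree]

theorem card_monicTuples (d : ι → ℕ) : #(monicTuples F d) = Fintype.card F ^ ∑ i, d i := by
  simp only [monicTuples, Fintype.card_piFinset, card_monicsOfDegree, prod_pow_eq_pow_sum]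

open Classical in
theorem card_filter_forall_dvd_monicTuples_mul_le {c : F[X]} (hc : c.Monic) (d : ι → ℕ)
    (J : Finset ι) :
    #{h ∈ monicTuples F d | ∀ i ∈ J, c ∣ h i} * Fintype.card F ^ (#J * c.natDegree) ≤
      Fintype.card F ^ ∑ i, d i := by
  let multiples (i : ι) : Finset F[X] := {p ∈ monicsOfDegree F (d i) | i ∈ J → c ∣ p}
  have hpi : {h ∈ monicTuples F d | ∀ i ∈ J, c ∣ h i} = Fintype.piFinset multiples := by
    ext h
    simp only [multiples, monicTuples, mem_filter, Fintype.mem_piFinset, forall_and]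
  have hJ : #J * c.natDegree = ∑ i, if i ∈ J then c.natDegree else 0 := by simp
  rw [hpi, Fintype.card_piFinset, hJ, ← prod_pow_eq_pow_sum, ← prod_mul_distrib,
    ← prod_pow_eq_pow_sum]
  refine prod_le_prod' fun i _ => ?_
  by_cases hi : i ∈ J
  · simpa [multiples, hi] using card_filter_dvd_monicsOfDegree_mul_le hc (d i)
  · simp [multiples, hi, card_monicsOfDegree]

open Classical in
theorem card_filter_common_divisor_monicTuples_mul_le (d : ι → ℕ) {x y : ι} (hxy : x ≠ y) {k : ℕ}
    (hk : 1 ≤ k) :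
    #{h ∈ monicTuples F d | ∃ c ∈ monicsOfDegree F k, c ∣ h x ∧ c ∣ h y} * Fintype.card F ≤
      Fintype.card F ^ ∑ i, d i := by
  set q := Fintype.card F
  have hq : 1 ≤ q := Fintype.card_pos
  have hcover : {h ∈ monicTuples F d | ∃ c ∈ monicsOfDegree F k, c ∣ h x ∧ c ∣ h y} ⊆
      (monicsOfDegree F k).biUnion fun c =>
        {h ∈ monicTuples F d | ∀ i ∈ ({x, y} : Finset ι), c ∣ h i} := by
    intro h hh
    obtain ⟨hd, c, hc, hcx, hcy⟩ := mem_filter.1 hh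
    exact mem_biUnion.2 ⟨c, hc, mem_filter.2 ⟨hd, by simp [hcx, hcy]⟩⟩
  have hfixed (c : F[X]) (hc : c ∈ monicsOfDegree F k) :
      #{h ∈ monicTuples F d | ∀ i ∈ ({x, y} : Finset ι), c ∣ h i} * q ^ (k + 1) ≤
        q ^ ∑ i, d i := by
    obtain ⟨hmonic, hdeg⟩ := mem_monicsOfDegree.1 hc
    refine le_trans ?_ (card_filter_forall_dvd_monicTuples_mul_le hmonic d {x, y})
    rw [card_pair hxy, hdeg]
    gcongr
    omega
  refine Nat.le_of_mul_le_mul_right ?_ (pow_pos hq k)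
  calc _ = #{h ∈ monicTuples F d | ∃ c ∈ monicsOfDegree F k, c ∣ h x ∧ c ∣ h y} * q ^ (k + 1) := by
        ring
    _ ≤ (∑ c ∈ monicsOfDegree F k,
          #{h ∈ monicTuples F d | ∀ i ∈ ({x, y} : Finset ι), c ∣ h i}) * q ^ (k + 1) := by
        gcongr
        exact (card_le_card hcover).trans card_biUnion_le
    _ ≤ ∑ _c ∈ monicsOfDegree F k, q ^ ∑ i, d i := by
        rw [sum_mul]
        exact sum_le_sum hfixed
    _ = (q ^ ∑ i, d i) * q ^ k := by
        rw [sum_const, card_monicsOfDegree, smul_eq_mul, mul_comm]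

open Classical in
theorem card_filter_not_isCoprime_monicTuples_mul_le (d : ι → ℕ) {x y : ι} (hxy : x ≠ y) :
    #{h ∈ monicTuples F d | ¬ IsCoprime (h x) (h y)} * Fintype.card F ≤
      d x * Fintype.card F ^ ∑ i, d i := by
  have hcover : {h ∈ monicTuples F d | ¬ IsCoprime (h x) (h y)} ⊆ (Icc 1 (d x)).biUnion fun k =>
      {h ∈ monicTuples F d | ∃ c ∈ monicsOfDegree F k, c ∣ h x ∧ c ∣ h y} := by
    intro h hh
    obtain ⟨hd, hcop⟩ := mem_filter.1 hh
    obtain ⟨hmonic, hdeg⟩ := mem_monicTuples.1 hd x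
    obtain ⟨c, hc, hpos, hcx, hcy⟩ := exists_monic_dvd_dvd_of_not_isCoprime hmonic.ne_zero hcop
    have hle : c.natDegree ≤ d x := hdeg ▸ natDegree_le_of_dvd hcx hmonic.ne_zero
    exact mem_biUnion.2 ⟨c.natDegree, mem_Icc.2 ⟨hpos, hle⟩,
      mem_filter.2 ⟨hd, c, mem_monicsOfDegree.2 ⟨hc, rfl⟩, hcx, hcy⟩⟩
  calc _ ≤ ∑ k ∈ Icc 1 (d x), #{h ∈ monicTuples F d |
          ∃ c ∈ monicsOfDegree F k, c ∣ h x ∧ c ∣ h y} * Fintype.card F := by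
        rw [← sum_mul]
        gcongr
        exact (card_le_card hcover).trans card_biUnion_le
    _ ≤ ∑ _k ∈ Icc 1 (d x), Fintype.card F ^ ∑ i, d i :=
        sum_le_sum fun k hk =>
          card_filter_common_divisor_monicTuples_mul_le d hxy (mem_Icc.1 hk).1
    _ = d x * Fintype.card F ^ ∑ i, d i := by simp

open Classical in
theorem card_filter_not_pairwise_isCoprime_monicTuples_mul_le (d : ι → ℕ) :
    #{h ∈ monicTuples F d | ¬ Pairwise (IsCoprime on h)} * Fintype.card F ≤
      Fintype.card ι * (∑ i, d i) * Fintype.card F ^ ∑ i, d i := by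
  have hcover : {h ∈ monicTuples F d | ¬ Pairwise (IsCoprime on h)} ⊆
      (univ : Finset ι).offDiag.biUnion fun x =>
        {h ∈ monicTuples F d | ¬ IsCoprime (h x.1) (h x.2)} := by
    intro h hh
    obtain ⟨hd, hcop⟩ := mem_filter.1 hh
    simp only [Pairwise, not_forall] at hcop
    obtain ⟨x, y, hxy, hcop⟩ := hcop
    exact mem_biUnion.2 ⟨(x, y), by simpa using hxy, mem_filter.2 ⟨hd, hcop⟩⟩
  calc _ ≤ ∑ x ∈ (univ : Finset ι).offDiag,
          #{h ∈ monicTuples F d | ¬ IsCoprime (h x.1) (h x.2)} * Fintype.card F := by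
        rw [← sum_mul]
        gcongr
        exact (card_le_card hcover).trans card_biUnion_le
    _ ≤ ∑ x ∈ (univ : Finset ι).offDiag, d x.1 * Fintype.card F ^ ∑ i, d i :=
        sum_le_sum fun x hx =>
          card_filter_not_isCoprime_monicTuples_mul_le d (mem_offDiag.1 hx).2.2
    _ ≤ ∑ x : ι × ι, d x.1 * Fintype.card F ^ ∑ i, d i :=
        sum_le_sum_of_subset (subset_univ _)
    _ = Fintype.card ι * (∑ i, d i) * Fintype.card F ^ ∑ i, d i := by
        simp only [← sum_mul, Fintype.sum_prod_type, sum_const, card_univ, smul_eq_mul, ← mul_sum]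

end MonicTuples

section MonicMatrices

variable {ι κ : Type*} [Fintype ι] [Fintype κ]

open Classical in
/-- The finite set of matrices of natural numbers with row sums `μ` and column sums `ν`. -/
noncomputable def contingencyTables (μ : ι → ℕ) (ν : κ → ℕ) : Finset (ι → κ → ℕ) :=
  {M ∈ Fintype.piFinset fun i => piAntidiag univ (μ i) | ∀ j, ∑ i, M i j = ν j}

theorem mem_contingencyTables {μ : ι → ℕ} {ν : κ → ℕ} {M : ι → κ → ℕ} :
    M ∈ contingencyTables μ ν ↔ (∀ i, ∑ j, M i j = μ i) ∧ ∀ j, ∑ i, M i j = ν j := by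
  simp [contingencyTables]

theorem sum_uncurry_of_mem_contingencyTables {μ : ι → ℕ} {ν : κ → ℕ} {M : ι → κ → ℕ}
    (hM : M ∈ contingencyTables μ ν) : ∑ x, uncurry M x = ∑ i, μ i := by
  simp only [Fintype.sum_prod_type, uncurry_apply_pair, (mem_contingencyTables.1 hM).1]

/-- The row products and the column products of a matrix, indexed by pairs. -/
def rowColProds {R : Type*} [CommMonoid R] (h : ι × κ → R) : (ι → R) × (κ → R) :=
  (fun i => ∏ j, h (i, j), fun j => ∏ i, h (i, j))

variable (F : Type*) [Field F]

/-- The tuples `(f, g)` of monic polynomials of degrees `μ` and `ν` such that `∏ f = ∏ g`. -/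
def equalProdTuples (μ : ι → ℕ) (ν : κ → ℕ) : Set ((ι → F[X]) × (κ → F[X])) :=
  {p | (∀ i, (p.1 i).Monic ∧ (p.1 i).natDegree = μ i) ∧
    (∀ j, (p.2 j).Monic ∧ (p.2 j).natDegree = ν j) ∧ ∏ i, p.1 i = ∏ j, p.2 j}

variable [Fintype F] (μ : ι → ℕ) (ν : κ → ℕ)

open Classical in
/-- The finite set of matrices of monic polynomials whose degrees sum to `μ` along the rows and to
`ν` along the columns. -/
noncomputable def monicMatrices : Finset (ι × κ → F[X]) :=
  (contingencyTables μ ν).biUnion fun M => monicTuples F (uncurry M)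

variable {F μ ν} in
theorem mem_monicMatrices {h : ι × κ → F[X]} :
    h ∈ monicMatrices F μ ν ↔ (∀ x, (h x).Monic) ∧
      (∀ i, ∑ j, (h (i, j)).natDegree = μ i) ∧ ∀ j, ∑ i, (h (i, j)).natDegree = ν j := by
  simp only [monicMatrices, mem_biUnion, mem_contingencyTables, mem_monicTuples]
  constructor
  · rintro ⟨M, hM, hh⟩
    refine ⟨fun x => (hh x).1, ?_⟩
    simpa only [(hh _).2, uncurry_apply_pair] using hM
  · rintro ⟨hmonic, hdeg⟩
    exact ⟨fun i j => (h (i, j)).natDegree, hdeg, fun x => ⟨hmonic x, rfl⟩⟩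

theorem card_monicMatrices :
    #(monicMatrices F μ ν) = #(contingencyTables μ ν) * Fintype.card F ^ ∑ i, μ i := by
  classical
  have hdisj : (contingencyTables μ ν : Set (ι → κ → ℕ)).PairwiseDisjoint
      fun M => monicTuples F (uncurry M) := by
    intro M _ M' _ hne
    refine disjoint_left.2 fun h hM hM' => hne ?_
    funext i j
    exact (mem_monicTuples.1 hM (i, j)).2.symm.trans (mem_monicTuples.1 hM' (i, j)).2
  rw [monicMatrices, card_biUnion hdisj]
  refine sum_const_nat fun M hM => ?_
  rw [card_monicTuples, sum_uncurry_of_mem_contingencyTables hM]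

open Classical in
theorem card_filter_not_pairwise_isCoprime_monicMatrices_mul_le :
    #{h ∈ monicMatrices F μ ν | ¬ Pairwise (IsCoprime on h)} * Fintype.card F ≤
      #(contingencyTables μ ν) * (Fintype.card (ι × κ) * (∑ i, μ i)) *
        Fintype.card F ^ ∑ i, μ i := by
  rw [monicMatrices, filter_biUnion, mul_assoc]
  calc _ ≤ ∑ M ∈ contingencyTables μ ν,
          #{h ∈ monicTuples F (uncurry M) | ¬ Pairwise (IsCoprime on h)} * Fintype.card F := by
        rw [← sum_mul]
        gcongr
        exact card_biUnion_le
    _ ≤ _ := by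
        rw [← smul_eq_mul #(contingencyTables μ ν)]
        refine sum_le_card_nsmul _ _ _ fun M hM => ?_
        rw [← sum_uncurry_of_mem_contingencyTables hM]
        exact card_filter_not_pairwise_isCoprime_monicTuples_mul_le _

theorem image_rowColProds_monicMatrices :
    rowColProds '' (monicMatrices F μ ν : Set (ι × κ → F[X])) = equalProdTuples F μ ν := by
  ext ⟨f, g⟩
  constructor
  · rintro ⟨h, hh, hfg⟩
    obtain ⟨rfl, rfl⟩ := Prod.mk.inj hfg
    obtain ⟨hm, hrow, hcol⟩ := mem_monicMatrices.1 hh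
    refine ⟨fun i => ⟨monic_prod_of_monic _ _ fun j _ => hm (i, j), ?_⟩,
      fun j => ⟨monic_prod_of_monic _ _ fun i _ => hm (i, j), ?_⟩, prod_comm⟩
    · exact (natDegree_prod_of_monic _ _ fun j _ => hm (i, j)).trans (hrow i)
    · exact (natDegree_prod_of_monic _ _ fun i _ => hm (i, j)).trans (hcol j)
  · rintro ⟨hf, hg, hfg⟩
    obtain ⟨h, hm, hrow, hcol⟩ :=
      exists_monic_matrix_prod_eq (fun i => (hf i).1) (fun j => (hg j).1) hfg
    refine ⟨h, mem_monicMatrices.2 ⟨hm, fun i => ?_, fun j => ?_⟩,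
      Prod.ext (funext hrow) (funext hcol)⟩
    · rw [← natDegree_prod_of_monic _ _ fun j _ => hm (i, j), hrow, (hf i).2]
    · rw [← natDegree_prod_of_monic _ _ fun i _ => hm (i, j), hcol, (hg j).2]

theorem injOn_rowColProds_monicMatrices :
    Set.InjOn rowColProds {h | h ∈ monicMatrices F μ ν ∧ Pairwise (IsCoprime on h)} := by
  rintro h ⟨hmem, hcop⟩ h' ⟨hmem', -⟩ heq
  exact eq_of_row_prod_eq_of_col_prod_eq (mem_monicMatrices.1 hmem).1 (mem_monicMatrices.1 hmem').1
    (congrFun (congrArg Prod.fst heq)) (congrFun (congrArg Prod.snd heq)) hcop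

open Classical in
theorem ncard_equalProdTuples :
    (equalProdTuples F μ ν).ncard = #((monicMatrices F μ ν).image rowColProds) := by
  rw [← image_rowColProds_monicMatrices, ← coe_image, Set.ncard_coe_finset]

theorem ncard_equalProdTuples_le :
    (equalProdTuples F μ ν).ncard ≤ #(contingencyTables μ ν) * Fintype.card F ^ ∑ i, μ i := by
  classical
  rw [ncard_equalProdTuples, ← card_monicMatrices]
  exact card_image_le

open Classical in
theorem card_mul_le_ncard_equalProdTuples_add :
    #(contingencyTables μ ν) * Fintype.card F ^ ∑ i, μ i ≤ (equalProdTuples F μ ν).ncard +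
      #{h ∈ monicMatrices F μ ν | ¬ Pairwise (IsCoprime on h)} := by
  have hinj : Set.InjOn rowColProds
      (SetLike.coe {h ∈ monicMatrices F μ ν | Pairwise (IsCoprime on h)}) := by
    simpa only [coe_filter] using injOn_rowColProds_monicMatrices F μ ν
  rw [ncard_equalProdTuples, ← card_monicMatrices,
    ← card_filter_add_card_filter_not (s := monicMatrices F μ ν) fun h => Pairwise (IsCoprime on h),
    ← card_image_of_injOn hinj]
  gcongr
  exact filter_subset _ _

theorem abs_ncard_equalProdTuples_div_sub_le :
    |((equalProdTuples F μ ν).ncard : ℝ) / (Fintype.card F : ℝ) ^ ∑ i, μ i -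
        #(contingencyTables μ ν)| ≤
      (#(contingencyTables μ ν) * (Fintype.card (ι × κ) * ∑ i, μ i) : ℕ) / Fintype.card F := by
  classical
  have hupper := ncard_equalProdTuples_le F μ ν
  have hlower := card_mul_le_ncard_equalProdTuples_add F μ ν
  have hbad := card_filter_not_pairwise_isCoprime_monicMatrices_mul_le F μ ν
  have hq : (0 : ℝ) < Fintype.card F := by exact_mod_cast Fintype.card_pos
  have hqn : (0 : ℝ) < (Fintype.card F : ℝ) ^ ∑ i, μ i := by positivity
  have hbad' : (#{h ∈ monicMatrices F μ ν | ¬ Pairwise (IsCoprime on h)} : ℝ) /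
      (Fintype.card F : ℝ) ^ ∑ i, μ i ≤
      (#(contingencyTables μ ν) * (Fintype.card (ι × κ) * ∑ i, μ i) : ℕ) / Fintype.card F := by
    rw [div_le_div_iff₀ hqn hq]
    exact_mod_cast hbad
  refine le_trans ?_ hbad'
  rw [abs_of_nonpos, neg_sub, sub_le_iff_le_add', ← add_div, le_div_iff₀ hqn]
  · exact_mod_cast hlower
  · rw [sub_nonpos, div_le_iff₀ hqn]
    exact_mod_cast hupper

end MonicMatrices

theorem polynomial_divisor_count_tendsto_general {ι κ : Type*} [Fintype ι] [Fintype κ]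
    (μ : ι → ℕ) (ν : κ → ℕ) :
    ∀ ε : ℝ, 0 < ε → ∃ C : ℕ, ∀ (F : Type u) [Field F] [Fintype F],
      C ≤ Fintype.card F →
      |(Nat.card {p : (ι → F[X]) × (κ → F[X]) //
          (∀ i, (p.1 i).Monic ∧ (p.1 i).natDegree = μ i) ∧
          (∀ j, (p.2 j).Monic ∧ (p.2 j).natDegree = ν j) ∧
          ∏ i, p.1 i = ∏ j, p.2 j} : ℝ) / (Fintype.card F : ℝ) ^ ∑ i, μ i -
        (Nat.card {M : ι → κ → ℕ //
          (∀ i, ∑ j, M i j = μ i) ∧ (∀ j, ∑ i, M i j = ν j)} : ℝ)| < ε := by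
  intro ε hε
  set K : ℕ := #(contingencyTables μ ν) * (Fintype.card (ι × κ) * ∑ i, μ i)
  obtain ⟨C, hC⟩ := exists_nat_gt (K / ε : ℝ)
  refine ⟨C, fun F _ _ hCF => ?_⟩
  have hq : (0 : ℝ) < Fintype.card F := by exact_mod_cast Fintype.card_pos
  have hKq : (K : ℝ) / Fintype.card F < ε :=
    (div_lt_comm₀ hq hε).2 (hC.trans_le (by exact_mod_cast hCF))
  rw [Nat.subtype_card (contingencyTables μ ν) fun _ => mem_contingencyTables]
  exact (abs_ncard_equalProdTuples_div_sub_le F μ ν).trans_lt hKq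

/-- For partitions `μ, ν ⊢ n`, the number `S(F)` of tuples of monic polynomials
`(f_1,…,f_m,g_1,…,g_l)` over a finite field `F` with `deg f_i = μ_i`, `deg g_j = ν_j` and
`f_1 ⋯ f_m = g_1 ⋯ g_l` satisfies `S(F)/q^n → N_{μ,ν}` as `q = |F| → ∞`. -/
theorem polynomial_divisor_count_tendsto (n : ℕ) (hn : 1 ≤ n) (m l : ℕ)
    (μ : Fin m → ℕ) (ν : Fin l → ℕ)
    (hμa : Antitone μ) (hμp : ∀ i, 0 < μ i) (hμs : ∑ i, μ i = n)
    (hνa : Antitone ν) (hνp : ∀ j, 0 < ν j) (hνs : ∑ j, ν j = n) :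
    ∀ ε : ℝ, 0 < ε → ∃ C : ℕ, ∀ (F : Type) [Field F] [Fintype F],
      C ≤ Fintype.card F →
      |(Nat.card {p : (Fin m → Polynomial F) × (Fin l → Polynomial F) //
          (∀ i, (p.1 i).Monic ∧ (p.1 i).natDegree = μ i) ∧
          (∀ j, (p.2 j).Monic ∧ (p.2 j).natDegree = ν j) ∧
          ∏ i, p.1 i = ∏ j, p.2 j} : ℝ) / (Fintype.card F : ℝ) ^ n -
        (Nmat μ ν : ℝ)| < ε := by
  subst hμs
  exact polynomial_divisor_count_tendsto_general μ ν
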